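/- Let f : H → ℝ ∪ {+∞} be proper, convex, lower semicontinuous and g : H → ℝ convex and Fréchet differentiable with (1/β)-Lipschitz gradient, such that argmin(f + g) ≠ ∅, and γ ∈ (0, 2β]. Under the same parameter conditions on (β_n), (λ_n) as in the forward-backward theorem, the iterates x_{n+1} = (1-λ_n)β_n x_n + λ_n prox_{γf}(β_n x_n - γ ∇g(β_n x_n)) converge strongly to the minimal norm minimizer of f + g. -/

import Mathlib

open Filter Topology

/-!
Relax the forward-backward map `T = prox_{γf} ∘ (id - γ ∇g)` by the factor
`m = (4β - γ) / (2β)`. Since `prox_{γf}` is firmly nonexpansive and `∇g` is `β`-cocoercive, the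
relaxed map `R = (1 - m) id + m T` is nonexpansive, its fixed points are the minimizers of `f + g`,
and the algorithm is the Krasnoselskii–Mann iteration of `R`, with weights `λ_n / m`, started at
each step from `y_n = β_n x_n`. Writing `p` for the fixed point of least norm,
`‖x_{n+1} - p‖² ≤ β_n ‖x_n - p‖² + (1 - β_n) (-2 ⟪y_n - p, p⟫)`. As `R y_n - y_n → 0`, weak cluster
points of `y_n` are fixed points of `R`, so the last factor has nonpositive upper limit, and the
divergence of `∑ (1 - β_n)` forces `x_n → p`.
-/

open Function
open scoped RealInnerProductSpace

section RealSequences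

lemma tendsto_zero_of_le_one_sub_mul {s a : ℕ → ℝ} (hs : ∀ n, 0 ≤ s n) (ha : ∀ n, 0 ≤ a n)
    (ha_div : ¬ Summable a) (h : ∀ n, s (n + 1) ≤ (1 - a n) * s n) :
    Tendsto s atTop (𝓝 0) := by
  have le_exp : ∀ n, s n ≤ s 0 * Real.exp (-∑ i ∈ Finset.range n, a i) := by
    intro n
    induction n with
    | zero => simp
    | succ n ih =>
      calc s (n + 1) ≤ (1 - a n) * s n := h n
        _ ≤ Real.exp (-a n) * s n :=
          mul_le_mul_of_nonneg_right (Real.one_sub_le_exp_neg _) (hs n)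
        _ ≤ Real.exp (-a n) * (s 0 * Real.exp (-∑ i ∈ Finset.range n, a i)) := by gcongr
        _ = s 0 * Real.exp (-∑ i ∈ Finset.range (n + 1), a i) := by
          rw [Finset.sum_range_succ, neg_add, Real.exp_add]
          ring
  have sum_tendsto := (not_summable_iff_tendsto_nat_atTop_of_nonneg ha).1 ha_div
  have exp_tendsto := (Real.tendsto_exp_neg_atTop_nhds_zero.comp sum_tendsto).const_mul (s 0)
  rw [mul_zero] at exp_tendsto
  exact squeeze_zero hs le_exp exp_tendsto

lemma tendsto_zero_of_le_one_sub_mul_add {s a d e : ℕ → ℝ} (hs : ∀ n, 0 ≤ s n)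
    (ha : ∀ n, a n ∈ Set.Icc 0 1) (ha_div : ¬ Summable a) (hd : ∀ ε > 0, ∀ᶠ n in atTop, d n ≤ ε)
    (he : Summable e) (h : ∀ n, s (n + 1) ≤ (1 - a n) * s n + a n * d n + e n) :
    Tendsto s atTop (𝓝 0) := by
  set r : ℕ → ℝ := fun n => ∑' i, e i - ∑ i ∈ Finset.range n, e i
  have r_succ (n : ℕ) : r (n + 1) = r n - e n := by simp only [r, Finset.sum_range_succ]; ring
  have r_tendsto : Tendsto r atTop (𝓝 0) := by
    simpa only [sub_self] using he.hasSum.tendsto_sum_nat.const_sub (∑' i, e i)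
  rw [Metric.tendsto_nhds]
  intro ε hε
  have quarter_pos : 0 < ε / 4 := by positivity
  obtain ⟨N, hN⟩ := eventually_atTop.1 <|
    (hd _ quarter_pos).and (r_tendsto.eventually (ge_mem_nhds quarter_pos))
  -- Adding the tail `r n` of `∑ e` absorbs the perturbations `e n`.
  set q : ℕ → ℝ := fun n => max (s n + r n - ε / 2) 0
  have q_succ_le : ∀ n ≥ N, q (n + 1) ≤ (1 - a n) * q n := by
    intro n hn
    obtain ⟨ha0, ha1⟩ := ha n
    obtain ⟨hdn, hrn⟩ := hN n hn
    refine max_le ?_ (mul_nonneg (sub_nonneg.2 ha1) (le_max_right _ _))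
    calc s (n + 1) + r (n + 1) - ε / 2
        ≤ (1 - a n) * (s n + r n - ε / 2) + a n * (d n + r n - ε / 2) := by
          rw [r_succ]; linarith [h n]
      _ ≤ (1 - a n) * (s n + r n - ε / 2) :=
          add_le_of_nonpos_right (mul_nonpos_of_nonneg_of_nonpos ha0 (by linarith))
      _ ≤ (1 - a n) * q n := mul_le_mul_of_nonneg_left (le_max_left _ _) (sub_nonneg.2 ha1)
  have q_tendsto : Tendsto q atTop (𝓝 0) := by
    refine (tendsto_add_atTop_iff_nat N).1 <|
      tendsto_zero_of_le_one_sub_mul (a := fun n => a (n + N)) (fun n => le_max_right _ _)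
        (fun n => (ha _).1) (mt (summable_nat_add_iff N).1 ha_div) fun n => ?_
    rw [add_right_comm]
    exact q_succ_le (n + N) (Nat.le_add_left _ _)
  filter_upwards [q_tendsto.eventually (gt_mem_nhds quarter_pos),
    r_tendsto.eventually (lt_mem_nhds (neg_neg_of_pos quarter_pos))] with n hq hr
  rw [Real.dist_eq, sub_zero, abs_of_nonneg (hs n)]
  linarith [(le_max_left _ _).trans_lt hq]

end RealSequences

section FixedPoints

lemma convex_fixedPoints_of_lipschitzWith_one {E : Type*} [NormedAddCommGroup E] [NormedSpace ℝ E]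
    [StrictConvexSpace ℝ E] {R : E → E} (hR : LipschitzWith 1 R) : Convex ℝ (fixedPoints R) := by
  refine convex_iff_segment_subset.2 fun u hu v hv => ?_
  rw [segment_eq_image_lineMap]
  rintro _ ⟨t, ⟨ht0, ht1⟩, rfl⟩
  set w := AffineMap.lineMap u v t
  have dist_left : dist u (R w) ≤ t * dist u v := by
    calc dist u (R w) = dist (R u) (R w) := by rw [hu.eq]
      _ ≤ dist u w := by simpa using hR.dist_le_mul u w
      _ = t * dist u v := by rw [dist_left_lineMap, Real.norm_of_nonneg ht0]
  have dist_right : dist (R w) v ≤ (1 - t) * dist u v := by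
    calc dist (R w) v = dist (R w) (R v) := by rw [hv.eq]
      _ ≤ dist w v := by simpa using hR.dist_le_mul w v
      _ = (1 - t) * dist u v := by
        rw [dist_lineMap_right, Real.norm_of_nonneg (sub_nonneg.2 ht1)]
  have triangle := dist_triangle u (R w) v
  exact eq_lineMap_of_dist_eq_mul_of_dist_eq_mul (by linarith) (by linarith)

variable {H : Type*} [NormedAddCommGroup H] [InnerProductSpace ℝ H]

lemma inner_sub_nonneg_of_isMinOn_norm {K : Set H} (hK : Convex ℝ K) {p z : H} (hp : p ∈ K)
    (hpmin : IsMinOn norm K p) (hz : z ∈ K) : 0 ≤ ⟪z - p, p⟫ := by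
  have : Nonempty K := ⟨⟨p, hp⟩⟩
  have norm_eq_iInf : ‖0 - p‖ = ⨅ w : K, ‖0 - (w : H)‖ := by
    simp only [zero_sub, norm_neg]
    exact le_antisymm (le_ciInf fun w => hpmin w.2)
      (ciInf_le ⟨0, Set.forall_mem_range.2 fun w : K => norm_nonneg (w : H)⟩ ⟨p, hp⟩)
  have := (norm_eq_iInf_iff_real_inner_le_zero hK hp).1 norm_eq_iInf z hz
  rwa [zero_sub, inner_neg_left, neg_nonpos, real_inner_comm] at this

/-- Weak convergence in a Hilbert space, tested against vectors through the inner product. -/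
def TendstoWeakly {ι : Type*} (y : ι → H) (l : Filter ι) (z : H) : Prop :=
  ∀ v : H, Tendsto (fun i => ⟪y i, v⟫) l (𝓝 ⟪z, v⟫)

lemma exists_tendstoWeakly_of_norm_le [CompleteSpace H] {ι : Type*} (U : Ultrafilter ι) {y : ι → H}
    {C : ℝ} (hy : ∀ i, ‖y i‖ ≤ C) : ∃ z, TendstoWeakly y U z := by
  let e : ι → WeakDual ℝ H := fun i => StrongDual.toWeakDual (InnerProductSpace.toDual ℝ H (y i))
  obtain ⟨φ, -, hφ⟩ :=
    (WeakDual.isCompact_closedBall (𝕜 := ℝ) (0 : StrongDual ℝ H) C).ultrafilter_le_nhds (U.map e)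
      (le_principal_iff.2 <| Filter.mem_map.2 <| univ_mem' fun i => by simpa [e] using hy i)
  refine ⟨(InnerProductSpace.toDual ℝ H).symm (WeakDual.toStrongDual φ), fun v => ?_⟩
  rw [InnerProductSpace.toDual_symm_apply]
  exact ((WeakDual.eval_continuous v).tendsto φ).comp hφ

/-- The demiclosedness principle. -/
lemma isFixedPt_of_tendstoWeakly {ι : Type*} {l : Filter ι} [l.NeBot] {R : H → H}
    (hR : LipschitzWith 1 R) {y : ι → H} {C : ℝ} (hy : ∀ i, ‖y i‖ ≤ C) {z : H}
    (hz : TendstoWeakly y l z) (hres : Tendsto (fun i => ‖R (y i) - y i‖) l (𝓝 0)) :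
    IsFixedPt R z := by
  have sq_le (i : ι) : ‖z - R z‖ ^ 2 ≤ ‖R (y i) - y i‖ ^ 2 +
      2 * ‖R (y i) - y i‖ * (C + ‖z‖) - 2 * (⟪y i, z - R z⟫ - ⟪z, z - R z⟫) := by
    have norm_le : ‖y i - R z‖ ≤ ‖R (y i) - y i‖ + ‖y i - z‖ := by
      calc ‖y i - R z‖ ≤ ‖y i - R (y i)‖ + ‖R (y i) - R z‖ :=
            norm_sub_le_norm_sub_add_norm_sub _ _ _
        _ ≤ ‖R (y i) - y i‖ + ‖y i - z‖ := by
            rw [norm_sub_rev]; gcongr; simpa using hR.norm_sub_le (y i) z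
    have expand : ‖y i - R z‖ ^ 2 = ‖y i - z‖ ^ 2 + 2 * ⟪y i - z, z - R z⟫ + ‖z - R z‖ ^ 2 := by
      rw [← norm_add_sq_real, sub_add_sub_cancel]
    have dist_le : ‖y i - z‖ ≤ C + ‖z‖ := (norm_sub_le _ _).trans (by gcongr; exact hy i)
    rw [inner_sub_left] at expand
    have sq_norm_le := pow_le_pow_left₀ (norm_nonneg _) norm_le 2
    have mul_dist_le := mul_le_mul_of_nonneg_left dist_le (norm_nonneg (R (y i) - y i))
    linarith [add_sq ‖R (y i) - y i‖ ‖y i - z‖]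
  have bound_tendsto := ((hres.pow 2).add ((hres.const_mul 2).mul_const (C + ‖z‖))).sub
    (((hz (z - R z)).sub_const ⟪z, z - R z⟫).const_mul 2)
  have sq_nonpos := ge_of_tendsto' bound_tendsto sq_le
  have norm_sub_eq_zero : ‖z - R z‖ = 0 := by
    refine pow_eq_zero_iff two_ne_zero |>.1 (le_antisymm ?_ (sq_nonneg _))
    simpa using sq_nonpos
  exact (sub_eq_zero.1 (norm_eq_zero.1 norm_sub_eq_zero)).symm

lemma eventually_neg_inner_sub_le_of_isMinOn_norm [CompleteSpace H] {ι : Type*} {l : Filter ι}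
    {R : H → H} (hR : LipschitzWith 1 R) {p : H} (hp : IsFixedPt R p)
    (hpmin : IsMinOn norm (fixedPoints R) p) {y : ι → H} {C : ℝ} (hy : ∀ i, ‖y i‖ ≤ C)
    (hres : Tendsto (fun i => ‖R (y i) - y i‖) l (𝓝 0)) {ε : ℝ} (hε : 0 < ε) :
    ∀ᶠ i in l, -⟪y i - p, p⟫ ≤ ε := by
  by_contra hcon
  let l' : Filter ι := l ⊓ 𝓟 {i | ¬ -⟪y i - p, p⟫ ≤ ε}
  have : l'.NeBot := frequently_mem_iff_neBot.1 (not_eventually.1 hcon)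
  have hU : (Ultrafilter.of l' : Filter ι) ≤ l' := Ultrafilter.of_le l'
  obtain ⟨z, hz⟩ := exists_tendstoWeakly_of_norm_le (Ultrafilter.of l') hy
  have hz_fixed := isFixedPt_of_tendstoWeakly hR hy hz (hres.mono_left (hU.trans inf_le_left))
  have inner_nonneg := inner_sub_nonneg_of_isMinOn_norm
    (convex_fixedPoints_of_lipschitzWith_one hR) hp hpmin hz_fixed
  have inner_tendsto : Tendsto (fun i => -⟪y i - p, p⟫) (Ultrafilter.of l') (𝓝 (-⟪z - p, p⟫)) := by
    simp only [inner_sub_left]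
    exact ((hz p).sub_const _).neg
  have le_neg_inner : ε ≤ -⟪z - p, p⟫ := by
    refine ge_of_tendsto inner_tendsto ?_
    filter_upwards [hU (mem_inf_of_right (mem_principal_self _))] with i hi
    exact (not_le.1 hi).le
  linarith

end FixedPoints

section MannIteration

section Module

variable {E : Type*} [AddCommGroup E] [Module ℝ E]

/-- The relaxation `(1 - a) id + a R` of a map `R`; over-relaxation `a > 1` is allowed. -/
def relaxation (R : E → E) (a : ℝ) (u : E) : E := (1 - a) • u + a • R u

lemma relaxation_sub_self (R : E → E) (a : ℝ) (u : E) : relaxation R a u - u = a • (R u - u) := by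
  rw [relaxation]; module

lemma relaxation_relaxation (R : E → E) (a b : ℝ) :
    relaxation (relaxation R b) a = relaxation R (a * b) := by
  funext u
  simp only [relaxation]
  module

lemma fixedPoints_relaxation (R : E → E) {a : ℝ} (ha : a ≠ 0) :
    fixedPoints (relaxation R a) = fixedPoints R := by
  ext u
  rw [mem_fixedPoints, mem_fixedPoints, IsFixedPt, IsFixedPt, ← sub_eq_zero, relaxation_sub_self,
    smul_eq_zero, or_iff_right ha, sub_eq_zero]

/-- `x` is a Krasnoselskii–Mann iteration of `R` with weights `a`, each step of which starts from
the current iterate multiplied by the Tikhonov factor `β n`. -/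
def IsTikhonovMannIteration (R : E → E) (β a : ℕ → ℝ) (x : ℕ → E) : Prop :=
  ∀ n, x (n + 1) = relaxation R (a n) (β n • x n)

end Module

section NormedSpace

variable {E : Type*} [NormedAddCommGroup E] [NormedSpace ℝ E]

lemma norm_relaxation_sub_relaxation_le {R : E → E} (hR : LipschitzWith 1 R) {b : ℝ}
    (hb : b ∈ Set.Icc 0 1) (a : ℝ) (v u : E) :
    ‖relaxation R b v - relaxation R a u‖ ≤ ‖v - u‖ + |b - a| * ‖R u - u‖ := by
  obtain ⟨hb0, hb1⟩ := hb
  have hRvu : ‖R v - R u‖ ≤ ‖v - u‖ := by simpa using hR.norm_sub_le v u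
  calc ‖relaxation R b v - relaxation R a u‖
      = ‖(1 - b) • (v - u) + b • (R v - R u) + (b - a) • (R u - u)‖ := by
        simp only [relaxation]; congr 1; module
    _ ≤ (1 - b) * ‖v - u‖ + b * ‖R v - R u‖ + |b - a| * ‖R u - u‖ := by
        refine norm_add₃_le.trans_eq ?_
        rw [norm_smul, norm_smul, norm_smul, Real.norm_of_nonneg (sub_nonneg.2 hb1),
          Real.norm_of_nonneg hb0, Real.norm_eq_abs]
    _ ≤ (1 - b) * ‖v - u‖ + b * ‖v - u‖ + |b - a| * ‖R u - u‖ := by gcongr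
    _ = ‖v - u‖ + |b - a| * ‖R u - u‖ := by ring

lemma norm_smul_sub_le_max {t : ℝ} (ht : t ∈ Set.Icc 0 1) (x p : E) :
    ‖t • x - p‖ ≤ max ‖x - p‖ ‖p‖ := by
  obtain ⟨ht0, ht1⟩ := ht
  calc ‖t • x - p‖ = ‖t • (x - p) + (1 - t) • (-p)‖ := by congr 1; module
    _ ≤ t * ‖x - p‖ + (1 - t) * ‖p‖ := by
        refine (norm_add_le _ _).trans_eq ?_
        rw [norm_smul, norm_smul, norm_neg, Real.norm_of_nonneg ht0,
          Real.norm_of_nonneg (sub_nonneg.2 ht1)]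
    _ ≤ t * max ‖x - p‖ ‖p‖ + (1 - t) * max ‖x - p‖ ‖p‖ := by
        have := sub_nonneg.2 ht1
        gcongr
        · exact le_max_left _ _
        · exact le_max_right _ _
    _ = max ‖x - p‖ ‖p‖ := by ring

lemma norm_smul_sub_smul_le {b : ℝ} (hb : 0 ≤ b) (a : ℝ) (y x : E) :
    ‖b • y - a • x‖ ≤ b * ‖y - x‖ + |b - a| * ‖x‖ := by
  calc ‖b • y - a • x‖ = ‖b • (y - x) + (b - a) • x‖ := by congr 1; module
    _ ≤ b * ‖y - x‖ + |b - a| * ‖x‖ := by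
        refine (norm_add_le _ _).trans_eq ?_
        rw [norm_smul, norm_smul, Real.norm_of_nonneg hb, Real.norm_eq_abs]

namespace IsTikhonovMannIteration

variable {R : E → E} {β a : ℕ → ℝ} {x : ℕ → E} {p : E} {C : ℝ}

lemma norm_succ_sub_le (hx : IsTikhonovMannIteration R β a x) (hR : LipschitzWith 1 R)
    (ha : ∀ n, a n ∈ Set.Icc 0 1) (hp : IsFixedPt R p) (n : ℕ) :
    ‖x (n + 1) - p‖ ≤ ‖β n • x n - p‖ := by
  have relaxation_fixed : relaxation R (a n) p = p := by
    rw [← sub_eq_zero, relaxation_sub_self, hp.eq, sub_self, smul_zero]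
  simpa only [← hx n, relaxation_fixed, sub_self, abs_zero, zero_mul, add_zero] using
    norm_relaxation_sub_relaxation_le hR (ha n) (a n) (β n • x n) p

lemma norm_sub_le (hx : IsTikhonovMannIteration R β a x) (hR : LipschitzWith 1 R)
    (hβ : ∀ n, β n ∈ Set.Icc 0 1) (ha : ∀ n, a n ∈ Set.Icc 0 1) (hp : IsFixedPt R p) (n : ℕ) :
    ‖x n - p‖ ≤ max ‖x 0 - p‖ ‖p‖ := by
  induction n with
  | zero => exact le_max_left _ _
  | succ n ih =>
    exact (hx.norm_succ_sub_le hR ha hp n).trans <|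
      (norm_smul_sub_le_max (hβ n) _ _).trans (max_le ih (le_max_right _ _))

lemma exists_norm_le (hx : IsTikhonovMannIteration R β a x) (hR : LipschitzWith 1 R)
    (hβ : ∀ n, β n ∈ Set.Icc 0 1) (ha : ∀ n, a n ∈ Set.Icc 0 1) (hp : IsFixedPt R p) :
    ∃ C, ∀ n, ‖x n‖ ≤ C ∧ ‖β n • x n‖ ≤ C ∧ ‖R (β n • x n) - β n • x n‖ ≤ C := by
  set M := max ‖x 0 - p‖ ‖p‖
  have hpM : ‖p‖ ≤ M := le_max_right _ _
  have norm_le_add (u : E) : ‖u‖ ≤ ‖u - p‖ + ‖p‖ := by simpa using norm_add_le (u - p) p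
  refine ⟨2 * M, fun n => ?_⟩
  have hxM : ‖x n - p‖ ≤ M := hx.norm_sub_le hR hβ ha hp n
  have hyM : ‖β n • x n - p‖ ≤ M := (norm_smul_sub_le_max (hβ n) _ _).trans (max_le hxM hpM)
  have hRM : ‖R (β n • x n) - p‖ ≤ M := by
    refine le_trans ?_ hyM
    simpa [hp.eq] using hR.norm_sub_le (β n • x n) p
  refine ⟨by linarith [norm_le_add (x n)], by linarith [norm_le_add (β n • x n)], ?_⟩
  have := norm_sub_le_norm_sub_add_norm_sub (R (β n • x n)) p (β n • x n)
  rw [norm_sub_rev p] at this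
  linarith

lemma tendsto_norm_succ_sub (hx : IsTikhonovMannIteration R β a x) (hR : LipschitzWith 1 R)
    (hβ : ∀ n, β n ∈ Set.Icc 0 1) (hβdiv : ¬ Summable fun n => 1 - β n)
    (hβvar : Summable fun n => |β (n + 1) - β n|) (ha : ∀ n, a n ∈ Set.Icc 0 1)
    (havar : Summable fun n => |a (n + 1) - a n|) (hxC : ∀ n, ‖x n‖ ≤ C)
    (hresC : ∀ n, ‖R (β n • x n) - β n • x n‖ ≤ C) :
    Tendsto (fun n => ‖x (n + 1) - x n‖) atTop (𝓝 0) := by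
  refine tendsto_zero_of_le_one_sub_mul_add (a := fun n => 1 - β (n + 1)) (d := fun _ => 0)
    (fun n => norm_nonneg _) (fun n => ⟨sub_nonneg.2 (hβ _).2, sub_le_self _ (hβ _).1⟩)
    (mt (summable_nat_add_iff (f := fun n => 1 - β n) 1).1 hβdiv)
    (fun ε hε => Eventually.of_forall fun _ => hε.le)
    ((hβvar.mul_right C).add (havar.mul_right C)) fun n => ?_
  calc ‖x (n + 1 + 1) - x (n + 1)‖
      = ‖relaxation R (a (n + 1)) (β (n + 1) • x (n + 1)) -
          relaxation R (a n) (β n • x n)‖ := by rw [← hx, ← hx]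
    _ ≤ ‖β (n + 1) • x (n + 1) - β n • x n‖ +
          |a (n + 1) - a n| * ‖R (β n • x n) - β n • x n‖ :=
        norm_relaxation_sub_relaxation_le hR (ha _) _ _ _
    _ ≤ β (n + 1) * ‖x (n + 1) - x n‖ + |β (n + 1) - β n| * ‖x n‖ +
          |a (n + 1) - a n| * ‖R (β n • x n) - β n • x n‖ := by
        gcongr; exact norm_smul_sub_smul_le (hβ _).1 _ _ _
    _ ≤ β (n + 1) * ‖x (n + 1) - x n‖ + |β (n + 1) - β n| * C + |a (n + 1) - a n| * C := by
        gcongr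
        · exact hxC n
        · exact hresC n
    _ = _ := by ring

lemma tendsto_norm_residual (hx : IsTikhonovMannIteration R β a x)
    (hβlim : Tendsto β atTop (𝓝 1)) {c : ℝ} (hc : 0 < c) (hac : ∀ᶠ n in atTop, c ≤ a n)
    (hxC : ∀ n, ‖x n‖ ≤ C) (hdiff : Tendsto (fun n => ‖x (n + 1) - x n‖) atTop (𝓝 0)) :
    Tendsto (fun n => ‖R (β n • x n) - β n • x n‖) atTop (𝓝 0) := by
  have step_tendsto : Tendsto (fun n => ‖x (n + 1) - β n • x n‖) atTop (𝓝 0) := by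
    have shrink_tendsto : Tendsto (fun n => (1 - β n) • x n) atTop (𝓝 0) := by
      refine Tendsto.zero_smul_isBoundedUnder_le ?_ (isBoundedUnder_of ⟨C, hxC⟩)
      simpa only [sub_self] using hβlim.const_sub 1
    have := (tendsto_zero_iff_norm_tendsto_zero.2 hdiff).add shrink_tendsto
    rw [add_zero] at this
    refine tendsto_zero_iff_norm_tendsto_zero.1 (this.congr fun n => ?_)
    module
  have quotient_tendsto := step_tendsto.div_const c
  rw [zero_div] at quotient_tendsto
  refine squeeze_zero' (Eventually.of_forall fun n => norm_nonneg _) ?_ quotient_tendsto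
  filter_upwards [hac] with n hn
  rw [le_div_iff₀' hc, hx n, relaxation_sub_self, norm_smul]
  gcongr
  exact hn.trans (le_abs_self _)

end IsTikhonovMannIteration

end NormedSpace

namespace IsTikhonovMannIteration

variable {H : Type*} [NormedAddCommGroup H] [InnerProductSpace ℝ H]
  {R : H → H} {β a : ℕ → ℝ} {x : ℕ → H} {p : H}

lemma sq_norm_succ_sub_le (hx : IsTikhonovMannIteration R β a x) (hR : LipschitzWith 1 R)
    (hβ : ∀ n, β n ∈ Set.Icc 0 1) (ha : ∀ n, a n ∈ Set.Icc 0 1) (hp : IsFixedPt R p) (n : ℕ) :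
    ‖x (n + 1) - p‖ ^ 2 ≤
      β n * ‖x n - p‖ ^ 2 + (1 - β n) * (2 * -⟪β n • x n - p, p⟫) := by
  obtain ⟨hβ0, hβ1⟩ := hβ n
  have expand : ‖β n • (x n - p)‖ ^ 2 = ‖β n • x n - p‖ ^ 2 +
      2 * (1 - β n) * ⟪β n • x n - p, p⟫ + ‖(1 - β n) • p‖ ^ 2 := by
    rw [show β n • (x n - p) = (β n • x n - p) + (1 - β n) • p by module, norm_add_sq_real,
      inner_smul_right, mul_assoc]
  calc ‖x (n + 1) - p‖ ^ 2
      ≤ ‖β n • x n - p‖ ^ 2 := by gcongr; exact hx.norm_succ_sub_le hR ha hp n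
    _ ≤ ‖β n • (x n - p)‖ ^ 2 + (1 - β n) * (2 * -⟪β n • x n - p, p⟫) := by
        linarith [sq_nonneg ‖(1 - β n) • p‖]
    _ ≤ β n * ‖x n - p‖ ^ 2 + (1 - β n) * (2 * -⟪β n • x n - p, p⟫) := by
        rw [norm_smul, mul_pow, Real.norm_of_nonneg hβ0]
        gcongr
        exact pow_le_of_le_one hβ0 hβ1 two_ne_zero

theorem tendsto_of_lipschitzWith_one [CompleteSpace H] (hx : IsTikhonovMannIteration R β a x)
    (hR : LipschitzWith 1 R) (hβ : ∀ n, β n ∈ Set.Icc 0 1) (hβlim : Tendsto β atTop (𝓝 1))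
    (hβdiv : ¬ Summable fun n => 1 - β n) (hβvar : Summable fun n => |β (n + 1) - β n|)
    (ha : ∀ n, a n ∈ Set.Icc 0 1) {c : ℝ} (hc : 0 < c) (hac : ∀ᶠ n in atTop, c ≤ a n)
    (havar : Summable fun n => |a (n + 1) - a n|) (hp : IsFixedPt R p)
    (hpmin : IsMinOn norm (fixedPoints R) p) :
    Tendsto x atTop (𝓝 p) := by
  obtain ⟨C, hC⟩ := hx.exists_norm_le hR hβ ha hp
  have hdiff := hx.tendsto_norm_succ_sub hR hβ hβdiv hβvar ha havar (fun n => (hC n).1)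
    fun n => (hC n).2.2
  have hres := hx.tendsto_norm_residual hβlim hc hac (fun n => (hC n).1) hdiff
  have sq_tendsto : Tendsto (fun n => ‖x n - p‖ ^ 2) atTop (𝓝 0) := by
    refine tendsto_zero_of_le_one_sub_mul_add (a := fun n => 1 - β n)
      (d := fun n => 2 * -⟪β n • x n - p, p⟫) (e := fun _ => 0) (fun n => sq_nonneg _)
      (fun n => ⟨sub_nonneg.2 (hβ n).2, sub_le_self _ (hβ n).1⟩) hβdiv (fun ε hε => ?_)
      summable_zero fun n => ?_
    · filter_upwards [eventually_neg_inner_sub_le_of_isMinOn_norm hR hp hpmin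
        (fun n => (hC n).2.1) hres (half_pos hε)] with n hn
      linarith
    · simpa only [sub_sub_cancel, add_zero] using hx.sq_norm_succ_sub_le hR hβ ha hp n
  rw [tendsto_iff_norm_sub_tendsto_zero]
  simpa only [Real.sqrt_sq (norm_nonneg _), Real.sqrt_zero] using sq_tendsto.sqrt

theorem tendsto_of_lipschitzWith_one_relaxation [CompleteSpace H] {T : H → H} {lam : ℕ → ℝ} {m : ℝ}
    (hx : IsTikhonovMannIteration T β lam x) (hm : 0 < m) (hT : LipschitzWith 1 (relaxation T m))
    (hβ : ∀ n, β n ∈ Set.Icc 0 1) (hβlim : Tendsto β atTop (𝓝 1))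
    (hβdiv : ¬ Summable fun n => 1 - β n) (hβvar : Summable fun n => |β (n + 1) - β n|)
    (hlam : ∀ n, lam n ∈ Set.Icc 0 m) {c : ℝ} (hc : 0 < c) (hlamc : ∀ᶠ n in atTop, c ≤ lam n)
    (hlamvar : Summable fun n => |lam (n + 1) - lam n|) (hp : IsFixedPt T p)
    (hpmin : IsMinOn norm (fixedPoints T) p) :
    Tendsto x atTop (𝓝 p) := by
  rw [← fixedPoints_relaxation T hm.ne'] at hpmin
  have hp' : p ∈ fixedPoints (relaxation T m) := by rwa [fixedPoints_relaxation T hm.ne']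
  have hx' : IsTikhonovMannIteration (relaxation T m) β (fun n => lam n / m) x := fun n => by
    rw [hx n, relaxation_relaxation, div_mul_cancel₀ _ hm.ne']
  refine hx'.tendsto_of_lipschitzWith_one hT hβ hβlim hβdiv hβvar
    (fun n => ⟨div_nonneg (hlam n).1 hm.le, div_le_one_of_le₀ (hlam n).2 hm.le⟩)
    (div_pos hc hm) (hlamc.mono fun n hn => div_le_div_of_nonneg_right hn hm.le) ?_ hp' hpmin
  refine (hlamvar.div_const m).congr fun n => ?_
  rw [← sub_div, abs_div, abs_of_pos hm]

end IsTikhonovMannIteration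

end MannIteration

section ForwardBackward

variable {H : Type*} [NormedAddCommGroup H] [InnerProductSpace ℝ H]

/-- `B` is `b`-cocoercive; for `b = 1` this is firm nonexpansiveness. -/
def IsCocoercive (b : ℝ) (B : H → H) : Prop :=
  ∀ u v, b * ‖B u - B v‖ ^ 2 ≤ ⟪B u - B v, u - v⟫

/-- The forward-backward map: a step of length `γ` along `-B`, followed by `J`. -/
def forwardBackward {E : Type*} [AddCommGroup E] [Module ℝ E] (J B : E → E) (γ : ℝ) (u : E) : E :=
  J (u - γ • B u)

/-- Read `d`, `t`, `e` as differences of arguments, values of `forwardBackward J B γ`, and values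
of `B`. -/
lemma two_mul_inner_add_mul_sq_nonpos {b γ : ℝ} (hb : 0 < b) (hγ : 0 ≤ γ) {d t e : H}
    (hfirm : ‖t‖ ^ 2 ≤ ⟪t, d - γ • e⟫) (hcoco : b * ‖e‖ ^ 2 ≤ ⟪e, d⟫) :
    2 * ⟪d, t - d⟫ + (4 * b - γ) / (2 * b) * ‖t - d‖ ^ 2 ≤ 0 := by
  obtain ⟨w, rfl⟩ : ∃ w, t = d + w := ⟨t - d, by abel⟩
  rw [add_sub_cancel_left]
  have firm_expanded : ‖w‖ ^ 2 + ⟪d, w⟫ + γ * ⟪w, e⟫ + γ * ⟪e, d⟫ ≤ 0 := by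
    rw [norm_add_sq_real, inner_sub_right, inner_add_left, inner_add_left, inner_smul_right,
      inner_smul_right, real_inner_self_eq_norm_sq, real_inner_comm d w, real_inner_comm e d]
      at hfirm
    linarith
  have square_expanded : 0 ≤ ‖w‖ ^ 2 + 4 * b * ⟪w, e⟫ + 4 * b ^ 2 * ‖e‖ ^ 2 := by
    have := sq_nonneg ‖w + (2 * b) • e‖
    rw [norm_add_sq_real, inner_smul_right, norm_smul, mul_pow, Real.norm_eq_abs, sq_abs] at this
    linarith
  have scaled : 2 * b * (2 * ⟪d, w⟫ + (4 * b - γ) / (2 * b) * ‖w‖ ^ 2) ≤ 0 := by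
    calc 2 * b * (2 * ⟪d, w⟫ + (4 * b - γ) / (2 * b) * ‖w‖ ^ 2)
        = 4 * b * (‖w‖ ^ 2 + ⟪d, w⟫ + γ * ⟪w, e⟫ + γ * ⟪e, d⟫)
          - γ * (‖w‖ ^ 2 + 4 * b * ⟪w, e⟫ + 4 * b ^ 2 * ‖e‖ ^ 2)
          - 4 * b * γ * (⟪e, d⟫ - b * ‖e‖ ^ 2) := by field_simp; ring
      _ ≤ 0 := by
        have := mul_nonpos_of_nonneg_of_nonpos (by positivity : 0 ≤ 4 * b) firm_expanded
        have := mul_nonneg hγ square_expanded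
        have := mul_nonneg (by positivity : 0 ≤ 4 * b * γ) (sub_nonneg.2 hcoco)
        linarith
  exact nonpos_of_mul_nonpos_right scaled (by positivity)

lemma lipschitzWith_one_relaxation_forwardBackward {J B : H → H} {b γ : ℝ} (hb : 0 < b)
    (hγ0 : 0 ≤ γ) (hγ : γ ≤ 4 * b) (hJ : IsCocoercive 1 J) (hB : IsCocoercive b B) :
    LipschitzWith 1 (relaxation (forwardBackward J B γ) ((4 * b - γ) / (2 * b))) := by
  set T := forwardBackward J B γ
  set m := (4 * b - γ) / (2 * b)
  have hm : 0 ≤ m := div_nonneg (by linarith) (by linarith)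
  refine lipschitzWith_iff_norm_sub_le.2 fun u v => ?_
  rw [NNReal.coe_one, one_mul]
  have firm : ‖T u - T v‖ ^ 2 ≤ ⟪T u - T v, (u - v) - γ • (B u - B v)⟫ := by
    have := hJ (u - γ • B u) (v - γ • B v)
    rwa [one_mul, show u - γ • B u - (v - γ • B v) = (u - v) - γ • (B u - B v) by module] at this
  have descent := two_mul_inner_add_mul_sq_nonpos hb hγ0 firm (hB u v)
  refine le_of_sq_le_sq ?_ (norm_nonneg _)
  calc ‖relaxation T m u - relaxation T m v‖ ^ 2
      = ‖(u - v) + m • (T u - T v - (u - v))‖ ^ 2 := by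
        simp only [relaxation]; congr 2; module
    _ = ‖u - v‖ ^ 2 + m * (2 * ⟪u - v, T u - T v - (u - v)⟫ +
          m * ‖T u - T v - (u - v)‖ ^ 2) := by
        rw [norm_add_sq_real, inner_smul_right, norm_smul, mul_pow, Real.norm_eq_abs, sq_abs]
        ring
    _ ≤ ‖u - v‖ ^ 2 := add_le_of_nonpos_right (mul_nonpos_of_nonneg_of_nonpos hm descent)

theorem tendsto_of_isTikhonovMannIteration_forwardBackward [CompleteSpace H] {J B : H → H}
    {b γ : ℝ} (hb : 0 < b) (hγ : 0 ≤ γ) (hJ : IsCocoercive 1 J) (hB : IsCocoercive b B)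
    {β lam : ℕ → ℝ} (hβ : ∀ n, β n ∈ Set.Icc 0 1) (hβlim : Tendsto β atTop (𝓝 1))
    (hβdiv : ¬ Summable fun n => 1 - β n) (hβvar : Summable fun n => |β (n + 1) - β n|)
    (hlam : ∀ n, lam n ∈ Set.Icc 0 ((4 * b - γ) / (2 * b))) (hlaminf : 0 < liminf lam atTop)
    (hlamvar : Summable fun n => |lam (n + 1) - lam n|) {x : ℕ → H}
    (hx : IsTikhonovMannIteration (forwardBackward J B γ) β lam x) {p : H}
    (hp : IsFixedPt (forwardBackward J B γ) p)
    (hpmin : IsMinOn norm (fixedPoints (forwardBackward J B γ)) p) :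
    Tendsto x atTop (𝓝 p) := by
  obtain ⟨c, hc0, hc⟩ := exists_between hlaminf
  have hlamc : ∀ᶠ n in atTop, c < lam n :=
    eventually_lt_of_lt_liminf hc (isBoundedUnder_of ⟨0, fun n => (hlam n).1⟩)
  obtain ⟨n, hn⟩ := hlamc.exists
  have hm : 0 < (4 * b - γ) / (2 * b) := (hc0.trans hn).trans_le (hlam n).2
  have hγb : γ ≤ 4 * b := (sub_pos.1 <| (div_pos_iff_of_pos_right (by positivity)).1 hm).le
  exact hx.tendsto_of_lipschitzWith_one_relaxation hm
    (lipschitzWith_one_relaxation_forwardBackward hb hγ hγb hJ hB) hβ hβlim hβdiv hβvar hlam hc0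
    (hlamc.mono fun _ => le_of_lt) hlamvar hp hpmin

end ForwardBackward

section Gradient

variable {H : Type*} [NormedAddCommGroup H] [InnerProductSpace ℝ H] [CompleteSpace H]
  {g : H → ℝ} {g' : H → H}

lemma tendsto_slope_of_hasGradientAt {v x : H} (hg : HasGradientAt g v x) (w : H) :
    Tendsto (fun t : ℝ => t⁻¹ * (g (x + t • w) - g x)) (𝓝[>] 0) (𝓝 ⟪v, w⟫) := by
  simpa only [InnerProductSpace.toDual_apply_apply, smul_eq_mul] using
    (hg.hasFDerivAt.hasLineDerivAt w).tendsto_slope_zero_right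

lemma add_inner_gradient_le_of_convexOn (hg : ConvexOn ℝ Set.univ g) {v x : H}
    (hv : HasGradientAt g v x) (y : H) : g x + ⟪v, y - x⟫ ≤ g y := by
  suffices ⟪v, y - x⟫ ≤ g y - g x by linarith
  refine le_of_tendsto (tendsto_slope_of_hasGradientAt hv (y - x)) ?_
  filter_upwards [Ioc_mem_nhdsGT (zero_lt_one' ℝ)] with t ⟨ht0, ht1⟩
  have segment_le : g (x + t • (y - x)) ≤ (1 - t) * g x + t * g y := by
    rw [show x + t • (y - x) = (1 - t) • x + t • y by module]
    exact hg.2 (Set.mem_univ x) (Set.mem_univ y) (sub_nonneg.2 ht1) ht0.le (by ring)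
  rw [inv_mul_le_iff₀ ht0]
  linarith

/-- The descent lemma. -/
lemma le_add_inner_gradient_add_sq_of_lipschitz {L : ℝ} (hg' : ∀ x, HasGradientAt g (g' x) x)
    (hL : ∀ x y, ‖g' x - g' y‖ ≤ L * ‖x - y‖) (x y : H) :
    g y ≤ g x + ⟪g' x, y - x⟫ + L / 2 * ‖y - x‖ ^ 2 := by
  set w := y - x with hw
  set φ : ℝ → ℝ := fun t => g (x + t • w) - t * ⟪g' x, w⟫ - t ^ 2 * (L / 2 * ‖w‖ ^ 2)
  have φ_deriv (t : ℝ) :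
      HasDerivAt φ (⟪g' (x + t • w) - g' x, w⟫ - t * (L * ‖w‖ ^ 2)) t := by
    have line_deriv : HasDerivAt (fun s : ℝ => x + s • w) w t := by
      simpa using ((hasDerivAt_id t).smul_const w).const_add x
    have g_deriv := (hg' (x + t • w)).hasFDerivAt.comp_hasDerivAt t line_deriv
    refine ((g_deriv.sub ((hasDerivAt_id t).mul_const _)).sub
      ((hasDerivAt_pow 2 t).mul_const _)).congr_deriv ?_
    rw [InnerProductSpace.toDual_apply_apply, inner_sub_left]
    push_cast
    ring
  have φ_antitone : AntitoneOn φ (Set.Icc 0 1) := by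
    refine antitoneOn_of_deriv_nonpos (convex_Icc 0 1)
      (fun t _ => (φ_deriv t).continuousAt.continuousWithinAt)
      (fun t _ => (φ_deriv t).differentiableAt.differentiableWithinAt) fun t ht => ?_
    rw [interior_Icc] at ht
    rw [(φ_deriv t).deriv, sub_nonpos]
    calc ⟪g' (x + t • w) - g' x, w⟫ ≤ ‖g' (x + t • w) - g' x‖ * ‖w‖ := real_inner_le_norm _ _
      _ ≤ L * ‖(x + t • w) - x‖ * ‖w‖ := by gcongr; exact hL _ _
      _ = t * (L * ‖w‖ ^ 2) := by
        rw [add_sub_cancel_left, norm_smul, Real.norm_of_nonneg ht.1.le]; ring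
  have φ_one_le_zero : φ 1 ≤ φ 0 :=
    φ_antitone (Set.left_mem_Icc.2 zero_le_one) (Set.right_mem_Icc.2 zero_le_one) zero_le_one
  simp only [φ, hw, one_smul, add_sub_cancel, zero_smul, add_zero] at φ_one_le_zero
  linarith

lemma add_inner_gradient_add_sq_le_of_lipschitz {b : ℝ} (hb : 0 < b)
    (hg : ConvexOn ℝ Set.univ g) (hg' : ∀ x, HasGradientAt g (g' x) x)
    (hL : ∀ x y, ‖g' x - g' y‖ ≤ 1 / b * ‖x - y‖) (x y : H) :
    g x + ⟪g' x, y - x⟫ + b / 2 * ‖g' x - g' y‖ ^ 2 ≤ g y := by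
  -- `y + b • e` minimizes the majorant of `g - ⟪g' x, ·⟫` around `y` given by the descent lemma.
  set e := g' x - g' y with he
  have lower := add_inner_gradient_le_of_convexOn hg (hg' x) (y + b • e)
  have upper := le_add_inner_gradient_add_sq_of_lipschitz hg' hL y (y + b • e)
  rw [add_sub_right_comm, inner_add_right, inner_smul_right] at lower
  rw [add_sub_cancel_left, inner_smul_right, norm_smul, Real.norm_of_nonneg hb.le] at upper
  have quadratic : 1 / b / 2 * (b * ‖e‖) ^ 2 = b / 2 * ‖e‖ ^ 2 := by field_simp
  have inner_diff : b * ⟪g' x, e⟫ - b * ⟪g' y, e⟫ = b * ‖e‖ ^ 2 := by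
    rw [← mul_sub, ← inner_sub_left, ← he, real_inner_self_eq_norm_sq]
  linarith

/-- The Baillon–Haddad theorem. -/
theorem isCocoercive_gradient_of_lipschitz {b : ℝ} (hb : 0 < b) (hg : ConvexOn ℝ Set.univ g)
    (hg' : ∀ x, HasGradientAt g (g' x) x) (hL : ∀ x y, ‖g' x - g' y‖ ≤ 1 / b * ‖x - y‖) :
    IsCocoercive b g' := by
  intro x y
  have hxy := add_inner_gradient_add_sq_le_of_lipschitz hb hg hg' hL x y
  have hyx := add_inner_gradient_add_sq_le_of_lipschitz hb hg hg' hL y x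
  rw [norm_sub_rev (g' y)] at hyx
  rw [← neg_sub x y, inner_neg_right] at hxy
  rw [inner_sub_left]
  linarith

end Gradient

section ProximalMap

/-- Convexity of an extended-real-valued function, which `ConvexOn` cannot express for want of a
scalar action of `ℝ` on `EReal`. -/
def IsConvexEReal {E : Type*} [AddCommGroup E] [Module ℝ E] (f : E → EReal) : Prop :=
  ∀ x y : E, ∀ t : ℝ, 0 ≤ t → t ≤ 1 →
    f (t • x + (1 - t) • y) ≤ (t : EReal) * f x + ((1 - t : ℝ) : EReal) * f y

/-- Properness of an extended-real-valued function. -/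
def IsProperEReal {α : Type*} (f : α → EReal) : Prop :=
  (∀ x, f x ≠ ⊥) ∧ ∃ x, f x ≠ ⊤

lemma ne_top_of_isMinOn_add_coe {α : Type*} {f : α → EReal} {g : α → ℝ} {q : α}
    (hf : ∃ x, f x ≠ ⊤) (hq : IsMinOn (fun y => f y + (g y : EReal)) Set.univ q) : f q ≠ ⊤ := by
  obtain ⟨z, hz⟩ := hf
  intro hq_top
  have hqz := isMinOn_univ_iff.1 hq z
  rw [hq_top, EReal.top_add_coe, top_le_iff] at hqz
  exact EReal.add_ne_top hz (EReal.coe_ne_top _) hqz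

/-- `P` is a proximal map of `γ f`: a choice, for each `x`, of a minimizer of
`f + ‖· - x‖² / (2γ)`. Convexity of `f` makes it unique for `γ > 0`, while its existence is part of
the definition. -/
def IsProximalMap {E : Type*} [SeminormedAddGroup E] (f : E → EReal) (γ : ℝ) (P : E → E) : Prop :=
  ∀ x y : E, f (P x) + ((‖P x - x‖ ^ 2 / (2 * γ) : ℝ) : EReal) ≤
    f y + ((‖y - x‖ ^ 2 / (2 * γ) : ℝ) : EReal)

variable {H : Type*} [NormedAddCommGroup H] [InnerProductSpace ℝ H]

/-- The vector `v` is a subgradient of `f` at `x`. -/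
def HasSubgradientAt (f : H → EReal) (v x : H) : Prop :=
  ∀ y, f x + ((⟪v, y - x⟫ : ℝ) : EReal) ≤ f y

variable {f : H → EReal} {g : H → ℝ} {γ : ℝ} {P : H → H}

lemma HasSubgradientAt.ne_top {v x : H} (hv : HasSubgradientAt f v x) (hf : ∃ y, f y ≠ ⊤) :
    f x ≠ ⊤ := by
  obtain ⟨y, hy⟩ := hf
  intro hx_top
  have hxy := hv y
  rw [hx_top, EReal.top_add_coe, top_le_iff] at hxy
  exact hy hxy

lemma HasSubgradientAt.inner_sub_sub_nonneg (hf : IsProperEReal f) {u v x y : H}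
    (hu : HasSubgradientAt f u x) (hv : HasSubgradientAt f v y) : 0 ≤ ⟪u - v, x - y⟫ := by
  have hxy := hu y
  have hyx := hv x
  lift f x to ℝ using ⟨hu.ne_top hf.2, hf.1 x⟩ with a
  lift f y to ℝ using ⟨hv.ne_top hf.2, hf.1 y⟩ with b
  norm_cast at hxy hyx
  rw [← neg_sub x y, inner_neg_right] at hxy
  rw [inner_sub_left]
  linarith

lemma isMinOn_add_of_hasSubgradientAt_neg [CompleteSpace H] (hg : ConvexOn ℝ Set.univ g) {v q : H}
    (hv : HasGradientAt g v q) (hf : HasSubgradientAt f (-v) q) :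
    IsMinOn (fun y => f y + (g y : EReal)) Set.univ q := by
  refine isMinOn_univ_iff.2 fun y => ?_
  have hgy : ((g q + ⟪v, y - q⟫ : ℝ) : EReal) ≤ (g y : EReal) :=
    EReal.coe_le_coe_iff.2 (add_inner_gradient_le_of_convexOn hg hv y)
  calc f q + (g q : EReal)
      = f q + ((⟪-v, y - q⟫ : ℝ) : EReal) + ((g q + ⟪v, y - q⟫ : ℝ) : EReal) := by
        rw [add_assoc, ← EReal.coe_add, inner_neg_left, add_comm (g q), neg_add_cancel_left]
    _ ≤ f y + (g y : EReal) := add_le_add (hf y) hgy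

lemma hasSubgradientAt_neg_of_isMinOn_add [CompleteSpace H] (hconv : IsConvexEReal f)
    (hproper : IsProperEReal f) {v q : H} (hv : HasGradientAt g v q)
    (hq : IsMinOn (fun y => f y + (g y : EReal)) Set.univ q) : HasSubgradientAt f (-v) q := by
  intro y
  obtain hy_top | hy_top := eq_or_ne (f y) ⊤
  · exact hy_top ▸ le_top
  have min_le_segment (t : ℝ) (ht0 : 0 ≤ t) (ht1 : t ≤ 1) : f q + (g q : EReal) ≤
      (t : EReal) * f y + ((1 - t : ℝ) : EReal) * f q + (g (q + t • (y - q)) : EReal) := by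
    rw [show q + t • (y - q) = t • y + (1 - t) • q by module]
    exact (isMinOn_univ_iff.1 hq _).trans (add_le_add_left (hconv y q t ht0 ht1) _)
  lift f q to ℝ using ⟨ne_top_of_isMinOn_add_coe hproper.2 hq, hproper.1 q⟩ with a
  lift f y to ℝ using ⟨hy_top, hproper.1 y⟩ with b
  norm_cast at min_le_segment ⊢
  have le_slope : a - b ≤ ⟪v, y - q⟫ := by
    refine ge_of_tendsto (tendsto_slope_of_hasGradientAt hv (y - q)) ?_
    filter_upwards [Ioc_mem_nhdsGT (zero_lt_one' ℝ)] with t ⟨ht0, ht1⟩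
    rw [le_inv_mul_iff₀ ht0]
    linarith [min_le_segment t ht0.le ht1]
  rw [inner_neg_left]
  linarith

lemma hasGradientAt_norm_sub_sq_div [CompleteSpace H] (γ : ℝ) (u q : H) :
    HasGradientAt (fun y => ‖y - u‖ ^ 2 / (2 * γ)) (γ⁻¹ • (q - u)) q := by
  rw [hasGradientAt_iff_hasFDerivAt]
  simp only [div_eq_mul_inv]
  refine (((hasFDerivAt_id q).sub_const u).norm_sq.mul_const (2 * γ)⁻¹).congr_fderiv ?_
  ext w
  simp only [mul_inv_rev, id_eq, map_sub, ContinuousLinearMap.comp_id, smul_apply, sub_apply,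
    coe_innerSL_apply, nsmul_eq_mul, Nat.cast_ofNat, smul_eq_mul, map_smul,
    InnerProductSpace.toDual_apply_apply]
  ring

namespace IsProximalMap

lemma hasSubgradientAt [CompleteSpace H] (hP : IsProximalMap f γ P) (hconv : IsConvexEReal f)
    (hproper : IsProperEReal f) (u : H) : HasSubgradientAt f (γ⁻¹ • (u - P u)) (P u) := by
  rw [← neg_sub, smul_neg]
  exact hasSubgradientAt_neg_of_isMinOn_add hconv hproper (hasGradientAt_norm_sub_sq_div γ u (P u))
    (isMinOn_univ_iff.2 (hP u))

lemma eq_iff_hasSubgradientAt [CompleteSpace H] (hP : IsProximalMap f γ P)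
    (hconv : IsConvexEReal f) (hproper : IsProperEReal f) (hγ : 0 < γ) {u q : H} :
    P u = q ↔ HasSubgradientAt f (γ⁻¹ • (u - q)) q := by
  refine ⟨fun h => h ▸ hP.hasSubgradientAt hconv hproper u, fun hq => ?_⟩
  have monotone := (hP.hasSubgradientAt hconv hproper u).inner_sub_sub_nonneg hproper hq
  rw [← smul_sub, sub_sub_sub_cancel_left, ← neg_sub (P u) q, smul_neg, inner_neg_left,
    real_inner_smul_left, real_inner_self_eq_norm_sq, neg_nonneg] at monotone
  have sq_nonpos := nonpos_of_mul_nonpos_right monotone (inv_pos.2 hγ)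
  exact sub_eq_zero.1 <| norm_eq_zero.1 <| pow_eq_zero_iff two_ne_zero |>.1 <|
    sq_nonpos.antisymm (sq_nonneg _)

lemma isCocoercive [CompleteSpace H] (hP : IsProximalMap f γ P) (hconv : IsConvexEReal f)
    (hproper : IsProperEReal f) (hγ : 0 < γ) : IsCocoercive 1 P := by
  intro u v
  have monotone := (hP.hasSubgradientAt hconv hproper u).inner_sub_sub_nonneg hproper
    (hP.hasSubgradientAt hconv hproper v)
  rw [← smul_sub, real_inner_smul_left] at monotone
  have inner_nonneg := nonneg_of_mul_nonneg_right monotone (inv_pos.2 hγ)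
  rw [sub_sub_sub_comm, inner_sub_left, real_inner_self_eq_norm_sq] at inner_nonneg
  rw [one_mul, real_inner_comm]
  linarith

lemma fixedPoints_forwardBackward [CompleteSpace H] (hP : IsProximalMap f γ P)
    (hconv : IsConvexEReal f) (hproper : IsProperEReal f) (hγ : 0 < γ)
    (hg : ConvexOn ℝ Set.univ g) {g' : H → H} (hg' : ∀ x, HasGradientAt g (g' x) x) :
    fixedPoints (forwardBackward P g' γ) =
      {q | IsMinOn (fun y => f y + (g y : EReal)) Set.univ q} := by
  ext q
  calc IsFixedPt (forwardBackward P g' γ) q ↔ HasSubgradientAt f (-g' q) q := by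
        rw [IsFixedPt, forwardBackward, hP.eq_iff_hasSubgradientAt hconv hproper hγ,
          sub_sub_cancel_left, smul_neg, inv_smul_smul₀ hγ.ne']
    _ ↔ IsMinOn (fun y => f y + (g y : EReal)) Set.univ q :=
      ⟨isMinOn_add_of_hasSubgradientAt_neg hg (hg' q),
        hasSubgradientAt_neg_of_isMinOn_add hconv hproper (hg' q)⟩

end IsProximalMap

end ProximalMap

theorem proxGrad_tikhonov_strong_convergence_general
    {H : Type*} [NormedAddCommGroup H] [InnerProductSpace ℝ H] [CompleteSpace H]
    {f : H → EReal} (hfconv : IsConvexEReal f) (hfproper : IsProperEReal f)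
    {b : ℝ} (hb : 0 < b) {g : H → ℝ} (hg : ConvexOn ℝ Set.univ g)
    {g' : H → H} (hg' : ∀ x, HasGradientAt g (g' x) x)
    (hglip : ∀ x y, ‖g' x - g' y‖ ≤ 1 / b * ‖x - y‖)
    {γ : ℝ} (hγ : 0 < γ) {P : H → H} (hP : IsProximalMap f γ P)
    {β lam : ℕ → ℝ} (hβ : ∀ n, β n ∈ Set.Icc 0 1) (hβlim : Tendsto β atTop (𝓝 1))
    (hβdiv : ¬ Summable fun n => 1 - β n) (hβvar : Summable fun n => |β (n + 1) - β n|)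
    (hlam : ∀ n, lam n ∈ Set.Icc 0 ((4 * b - γ) / (2 * b))) (hlaminf : 0 < liminf lam atTop)
    (hlamvar : Summable fun n => |lam (n + 1) - lam n|)
    {x : ℕ → H} (hx : IsTikhonovMannIteration (forwardBackward P g' γ) β lam x)
    {p : H} (hp : IsMinOn (fun y => f y + (g y : EReal)) Set.univ p)
    (hpmin : IsMinOn norm {q | IsMinOn (fun y => f y + (g y : EReal)) Set.univ q} p) :
    Tendsto x atTop (𝓝 p) := by
  have fixedPoints_eq := hP.fixedPoints_forwardBackward hfconv hfproper hγ hg hg'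
  rw [← fixedPoints_eq] at hpmin
  have hp_fixed : p ∈ fixedPoints (forwardBackward P g' γ) := fixedPoints_eq ▸ hp
  exact tendsto_of_isTikhonovMannIteration_forwardBackward hb hγ.le
    (hP.isCocoercive hfconv hfproper hγ) (isCocoercive_gradient_of_lipschitz hb hg hg' hglip)
    hβ hβlim hβdiv hβvar hlam hlaminf hlamvar hx hp_fixed hpmin

/-- Strong convergence of the proximal-gradient (forward-backward) algorithm
with Tikhonov regularization terms to the minimal norm minimizer of `f + g`,
where `f : H → EReal` is proper, convex and lower semicontinuous, `g : H → ℝ`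
is convex and differentiable with `(1/β)`-Lipschitz gradient `g'`,
`γ ∈ (0, 2β]`, and `prox` is the proximal operator of `γ f`, characterized by
`prox x` minimizing `y ↦ f y + ‖y - x‖² / (2γ)`. -/
theorem proxGrad_tikhonov_strong_convergence
    {H : Type*} [NormedAddCommGroup H] [InnerProductSpace ℝ H] [CompleteSpace H]
    (f : H → EReal)
    (hfconv : ∀ x y : H, ∀ t : ℝ, 0 ≤ t → t ≤ 1 →
      f (t • x + (1 - t) • y) ≤ ((t : EReal) * f x + ((1 - t : ℝ) : EReal) * f y))
    (hflsc : LowerSemicontinuous f)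
    (hfproper : (∀ x, f x ≠ ⊥) ∧ ∃ x, f x ≠ ⊤)
    (βc : ℝ) (hβc : 0 < βc)
    (g : H → ℝ) (hgconv : ConvexOn ℝ Set.univ g)
    (g' : H → H) (hg' : ∀ x : H, HasGradientAt g (g' x) x)
    (hglip : ∀ x y : H, ‖g' x - g' y‖ ≤ (1 / βc) * ‖x - y‖)
    (γ : ℝ) (hγ : γ ∈ Set.Ioc 0 (2 * βc))
    (prox : H → H)
    (hprox : ∀ x y : H,
      f (prox x) + ((‖prox x - x‖ ^ 2 / (2 * γ) : ℝ) : EReal) ≤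
        f y + ((‖y - x‖ ^ 2 / (2 * γ) : ℝ) : EReal))
    (hargmin_ne :
      {z : H | ∀ y : H, f z + ((g z : ℝ) : EReal) ≤ f y + ((g y : ℝ) : EReal)}.Nonempty)
    (β lam : ℕ → ℝ)
    (hβ : ∀ n, 0 < β n ∧ β n ≤ 1)
    (hβlim : Tendsto β atTop (nhds 1))
    (hβdiv : ¬ Summable (fun n => 1 - β n))
    (hβvar : Summable (fun n => |β (n + 1) - β n|))
    (hlam : ∀ n, 0 < lam n ∧ lam n ≤ (4 * βc - γ) / (2 * βc))
    (hlaminf : 0 < Filter.liminf lam Filter.atTop)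
    (hlamvar : Summable (fun n => |lam (n + 1) - lam n|))
    (x : ℕ → H)
    (hiter : ∀ n, x (n + 1) =
      (1 - lam n) • (β n • x n) + lam n • prox (β n • x n - γ • g' (β n • x n)))
    (p : H)
    (hp : ∀ y : H, f p + ((g p : ℝ) : EReal) ≤ f y + ((g y : ℝ) : EReal))
    (hpmin : ∀ q : H,
      (∀ y : H, f q + ((g q : ℝ) : EReal) ≤ f y + ((g y : ℝ) : EReal)) → ‖p‖ ≤ ‖q‖) :
    Tendsto x atTop (nhds p) :=
  proxGrad_tikhonov_strong_convergence_general hfconv hfproper hβc hgconv hg' hglip hγ.1 hprox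
    (fun n => ⟨(hβ n).1.le, (hβ n).2⟩) hβlim hβdiv hβvar (fun n => ⟨(hlam n).1.le, (hlam n).2⟩)
    hlaminf hlamvar hiter (isMinOn_univ_iff.2 hp)
    fun q hq => hpmin q (isMinOn_univ_iff.1 (Set.mem_ofPred.1 hq))
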